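/- Let w be a word of length n in the letters u_1^{±1}, ..., u_N^{±1} whose cyclic reduction has length k ≥ 1, and let w' and w'' be two cyclic permutations of w, both having good reduction. Then the unique w'-admissible half-pairing and the unique w''-admissible half-pairing, when rotated back to the original indexing of the letters of w, coincide as half-pairings on [n]. Consequently every word w (with cyclic reduction of positive length) carries a canonical half-pairing, independent of which cyclic permutation with good reduction is used to construct it. -/

import Mathlib

/-!
Cut open and unrolled to `ℤ`, the rotated words become the same periodic bi-infinite word `u`, and
the half-pairings become non-crossing pairings of `ℤ` with through strings. So it suffices that `u`
determines an admissible pairing of `ℤ`.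

Read `u` from left to right starting at an outward point, pushing outward points on a stack and
letting each closer pop its opener. Non-crossing means that a closer always finds its opener on top.
An outward point is covered by the top of the stack, so admissibility forbids their letters to
cancel. Hence the stack always spells the reduced form of the word read so far. Two consequences:

* A point `j` is a closer iff its letter cancels against the last letter of the reduction of `u` on
  `[p, j)`, for any through string `p < j`. Through strings are never popped, so this reduction
  becomes arbitrarily long as `p` moves to the left, and a bounded change of `p` does not affect its
  last letter. So `u` determines the closers.
* The mate of a closer `j` is the last `i < j` for which `u` on `[i, j]` reduces to `1`, which
  depends on `u` alone.
-/

namespace NCC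

/-- A letter `u_i^{±1}`: a generator index together with a sign. -/
abbrev Letter (N : ℕ) := Fin N × Bool

/-- The inverse of a letter. -/
def linv {N : ℕ} (l : Letter N) : Letter N := (l.1, !l.2)

/-- One cyclic reduction step: either a linear reduction step (removal of two
adjacent letters which are inverses of each other), or removal of the first and
last letters when they are inverses of each other. -/
def CyclicStep {N : ℕ} (w w' : List (Letter N)) : Prop :=
  FreeGroup.Red.Step w w' ∨
    ∃ (l : Letter N) (m : List (Letter N)), w = l :: (m ++ [linv l]) ∧ w' = m

/-- `w` reduces cyclically (in zero or more steps) to `v`. -/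
def CycReducesTo {N : ℕ} (w v : List (Letter N)) : Prop :=
  Relation.ReflTransGen CyclicStep w v

/-- A word is linearly reduced when no two adjacent letters are inverses of
each other. -/
def LinReduced {N : ℕ} (w : List (Letter N)) : Prop :=
  List.Chain' (fun a b => b ≠ linv a) w

/-- A word is cyclically reduced iff `w ++ w` is linearly reduced, i.e. it is
linearly reduced and its last letter is not the inverse of its first letter. -/
def CycReduced {N : ℕ} (w : List (Letter N)) : Prop :=
  LinReduced (w ++ w)

/-- A word is reducible to 1 if it linearly reduces to the empty word. -/
def ReducibleToOne {N : ℕ} (w : List (Letter N)) : Prop :=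
  FreeGroup.Red w []

/-- A word has good reduction: no nonempty prefix is reducible to 1, and its
linear reduction is cyclically reduced. -/
def GoodReduction {N : ℕ} (w : List (Letter N)) : Prop :=
  (∀ s, s <+: w → s ≠ [] → ¬ ReducibleToOne s) ∧
    CycReduced (FreeGroup.reduce w)

/-- The first `i` letters of the infinite word `w_∞ = w w w ⋯`. -/
def infTake {N : ℕ} (w : List (Letter N)) (i : ℕ) : List (Letter N) :=
  ((List.replicate i w).flatten).take i

open scoped Classical

/-- `i` and `j` lie in a common block of the partition `P`. -/
def Rel {n : ℕ} (P : Finpartition (Finset.univ : Finset (Fin n))) (i j : Fin n) : Prop :=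
  ∃ B ∈ P.parts, i ∈ B ∧ j ∈ B

/-- `i` lies in a singleton block of `P`. -/
def IsSingleton {n : ℕ} (P : Finpartition (Finset.univ : Finset (Fin n))) (i : Fin n) : Prop :=
  ∃ B ∈ P.parts, i ∈ B ∧ B.card = 1

/-- The relation of the partition `π̃` obtained from `P` by merging all
singleton blocks into a single block. -/
def RelTilde {n : ℕ} (P : Finpartition (Finset.univ : Finset (Fin n))) (i j : Fin n) : Prop :=
  Rel P i j ∨ (IsSingleton P i ∧ IsSingleton P j)

/-- An equivalence-like relation on `[n]` is non-crossing when there are no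
`i₁ < i₂ < i₃ < i₄` with `i₁ ∼ i₃`, `i₂ ∼ i₄` but `i₁ ≁ i₂`. -/
def NonCrossingRel {n : ℕ} (r : Fin n → Fin n → Prop) : Prop :=
  ∀ i1 i2 i3 i4 : Fin n, i1 < i2 → i2 < i3 → i3 < i4 → r i1 i3 → r i2 i4 → r i1 i2

/-- A non-crossing half-pairing on `[n]`: a non-crossing partition all of whose
blocks have at most two elements, with at least one singleton block (through
string), such that merging all singleton blocks still gives a non-crossing
partition. -/
structure HalfPairing (n : ℕ) where
  P : Finpartition (Finset.univ : Finset (Fin n))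
  card_le : ∀ B ∈ P.parts, B.card ≤ 2
  exists_singleton : ∃ i, IsSingleton P i
  nc : NonCrossingRel (Rel P)
  nc_tilde : NonCrossingRel (RelTilde P)

/-- `r` and `s` form a pair (a two-element block) of `π`. -/
def Pairs {n : ℕ} (π : HalfPairing n) (r s : Fin n) : Prop :=
  r ≠ s ∧ Rel π.P r s

/-- Membership in the cyclic interval `[i, j]` (going clockwise from `i` to
`j`, endpoints included). -/
def InCyc {n : ℕ} (i j x : Fin n) : Prop :=
  (x.val + n - i.val) % n ≤ (j.val + n - i.val) % n

/-- Cyclic successor of `i` in `[n]`. -/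
def cnext {n : ℕ} (i : Fin n) : Fin n :=
  ⟨(i.val + 1) % n, Nat.mod_lt _ i.pos⟩

/-- Cyclic predecessor of `i` in `[n]`. -/
def cprev {n : ℕ} (i : Fin n) : Fin n :=
  ⟨(i.val + n - 1) % n, Nat.mod_lt _ i.pos⟩

/-- `a + j` modulo `n`. -/
def cadd {n : ℕ} (a j : Fin n) : Fin n :=
  ⟨(a.val + j.val) % n, Nat.mod_lt _ a.pos⟩

/-- `x - a` modulo `n`. -/
def csub {n : ℕ} (x a : Fin n) : Fin n :=
  ⟨(x.val + n - a.val) % n, Nat.mod_lt _ a.pos⟩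

/-- `i` has the outward orientation: it is a singleton, or it is the point of a
pair `(i, s)` such that the cyclic interval `[i, s]` contains no singleton. -/
def OutOriented {n : ℕ} (π : HalfPairing n) (i : Fin n) : Prop :=
  IsSingleton π.P i ∨
    ∃ s, Pairs π i s ∧ ∀ x, InCyc i s x → ¬ IsSingleton π.P x

/-- `i` covers `j`: both are outward oriented, and either `j` is the cyclic
successor of `i`, or `π` pairs each point of the cyclic interval
`[i+1, j-1]` with another point of `[i+1, j-1]`. -/
def Covers {n : ℕ} (π : HalfPairing n) (i j : Fin n) : Prop :=
  OutOriented π i ∧ OutOriented π j ∧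
    (j = cnext i ∨
      ∀ x, InCyc (cnext i) (cprev j) x →
        ∃ y, y ≠ x ∧ InCyc (cnext i) (cprev j) y ∧ Pairs π x y)

/-- The set of through strings (singleton blocks) of `π`. -/
noncomputable def throughFinset {n : ℕ} (π : HalfPairing n) : Finset (Fin n) :=
  Finset.univ.filter (fun i => IsSingleton π.P i)

/-- The word formed by the letters of `w` at the through strings of `π`,
read in increasing order of position. -/
noncomputable def throughWord {n N : ℕ} (w : Fin n → Letter N) (π : HalfPairing n) :
    List (Letter N) :=
  ((throughFinset π).sort (· ≤ ·)).map w

/-- `π` is a `w`-pairing: paired positions carry mutually inverse letters, and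
the through-string letters, read in order, form a cyclic reduction of `w`. -/
def IsWPairing {n N : ℕ} (w : Fin n → Letter N) (π : HalfPairing n) : Prop :=
  (∀ r s, Pairs π r s → w r = linv (w s)) ∧
    CycReducesTo (List.ofFn w) (throughWord w π) ∧ CycReduced (throughWord w π)

/-- `π` is `w`-admissible: it is a `w`-pairing and `l_i ≠ l_j⁻¹` whenever
`i` covers `j`. -/
def Admissible {n N : ℕ} (w : Fin n → Letter N) (π : HalfPairing n) : Prop :=
  IsWPairing w π ∧ ∀ i j, Covers π i j → w i ≠ linv (w j)

/-! ### Words in a free group -/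

theorem linv_linv {N : ℕ} (l : Letter N) : linv (linv l) = l := by
  simp [linv]

theorem ne_linv_self {N : ℕ} (l : Letter N) : l ≠ linv l :=
  fun h => Bool.self_ne_not l.2 (congrArg Prod.snd h)

theorem mk_mul_mk_linv {N : ℕ} (l : Letter N) :
    FreeGroup.mk [l] * FreeGroup.mk [linv l] = 1 :=
  mul_inv_cancel (FreeGroup.mk [l])

theorem isReduced_map_of_isChain {ι : Type*} {N : ℕ} (u : ι → Letter N) {L : List ι}
    (h : L.IsChain fun i j => u i ≠ linv (u j)) : FreeGroup.IsReduced (L.map u) := by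
  refine (List.isChain_map u).2 (h.imp fun i j hij hgen => ?_)
  by_contra hsign
  exact hij (Prod.ext hgen (Bool.eq_not_of_ne hsign))

theorem tail_reduce_suffix_reduce_cons {α : Type*} [DecidableEq α] (a : α × Bool)
    (x : List (α × Bool)) : (FreeGroup.reduce x).tail <:+ FreeGroup.reduce (a :: x) := by
  rw [FreeGroup.reduce.cons]
  rcases FreeGroup.reduce x with _ | ⟨b, y⟩
  · exact List.nil_suffix
  · dsimp only [List.tail_cons]
    split_ifs
    · exact List.suffix_rfl
    · exact ⟨[a, b], rfl⟩

theorem drop_reduce_suffix_reduce_append {α : Type*} [DecidableEq α] (x y : List (α × Bool)) :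
    (FreeGroup.reduce y).drop x.length <:+ FreeGroup.reduce (x ++ y) := by
  induction x with
  | nil => exact List.suffix_rfl
  | cons a x ih =>
    obtain ⟨s, hs⟩ := ih
    have htail : ((FreeGroup.reduce y).drop x.length).tail <:+
        (FreeGroup.reduce (x ++ y)).tail := by
      rw [← hs]
      cases s with
      | nil => exact List.suffix_rfl
      | cons b s => exact (List.tail_suffix _).trans (List.suffix_append s _)
    rw [List.tail_drop] at htail
    exact htail.trans (tail_reduce_suffix_reduce_cons a (x ++ y))

theorem getLast?_reduce_append {α : Type*} [DecidableEq α] (x y : List (α × Bool))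
    (h : x.length < (FreeGroup.reduce y).length) :
    (FreeGroup.reduce (x ++ y)).getLast? = (FreeGroup.reduce y).getLast? := by
  obtain ⟨s, hs⟩ := drop_reduce_suffix_reduce_append x y
  rw [← hs, List.getLast?_append_of_ne_nil, List.getLast?_drop, if_neg (by lia)]
  simpa using h

/-- The subword of the bi-infinite word `u` at the positions `p ≤ x < q`. -/
def seg {N : ℕ} (u : ℤ → Letter N) (p q : ℤ) : List (Letter N) :=
  (Int.range p q).map u

theorem length_seg {N : ℕ} (u : ℤ → Letter N) (p q : ℤ) : (seg u p q).length = (q - p).toNat := by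
  simp [seg, Int.range]

theorem seg_append_seg {N : ℕ} (u : ℤ → Letter N) {p q r : ℤ} (hpq : p ≤ q) (hqr : q ≤ r) :
    seg u p q ++ seg u q r = seg u p r := by
  obtain ⟨k, rfl⟩ := Int.le.dest hpq
  obtain ⟨l, rfl⟩ := Int.le.dest hqr
  have hlen : (p + k + l - p).toNat = k + l := by lia
  simp only [seg, Int.range, hlen, add_sub_cancel_left, Int.toNat_natCast, List.range_add,
    List.map_append, List.map_map]
  congr 2
  funext x
  simp [add_assoc]

theorem seg_succ {N : ℕ} (u : ℤ → Letter N) {p q : ℤ} (hpq : p ≤ q) :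
    seg u p (q + 1) = seg u p q ++ [u q] := by
  rw [← seg_append_seg u hpq (Int.le_add_one le_rfl)]
  simp [seg, Int.range]

/-! ### Admissible pairings of the line -/

/-- Every point strictly between `i` and `j` is paired by `M` with another such point. -/
def Balanced (M : ℤ → ℤ → Prop) (i j : ℤ) : Prop :=
  ∀ x, i < x → x < j → ∃ y, i < y ∧ y < j ∧ (M x y ∨ M y x)

/-- A half-pairing unrolled along the universal cover `ℤ` of the circle: a non-crossing pairing of
`ℤ` with through strings in every interval of length `n`. `Mate i j` means that `i < j` are
paired, so `i` is the opener and `j` the closer; periodicity is not recorded. -/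
structure LinePairing (n : ℕ) where
  Through : ℤ → Prop
  Mate : ℤ → ℤ → Prop
  exists_through : ∀ c : ℤ, ∃ x : ℤ, c ≤ x ∧ x < c + n ∧ Through x
  lt : ∀ {i j}, Mate i j → i < j
  right_unique : ∀ {i j k}, Mate i j → Mate i k → j = k
  left_unique : ∀ {i j k}, Mate i k → Mate j k → i = j
  not_mate_of_mate : ∀ {i j k}, Mate i j → ¬ Mate j k
  not_through_left : ∀ {i j}, Mate i j → ¬ Through i
  not_through_right : ∀ {i j}, Mate i j → ¬ Through j
  total : ∀ x, (Through x ∨ ∃ j, Mate x j) ∨ ∃ i, Mate i x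
  balanced : ∀ {i j}, Mate i j → Balanced Mate i j

namespace LinePairing

variable {N n : ℕ} {u : ℤ → Letter N} {P Q : LinePairing n} {p t i j : ℤ} {L : List ℤ}

/-- The outward points of a pairing of the line: the through strings and the openers. -/
def Out (P : LinePairing n) (i : ℤ) : Prop :=
  P.Through i ∨ ∃ j, P.Mate i j

/-- The counterpart on the line of an admissible half-pairing: mates carry mutually inverse letters,
and an outward point never carries the inverse of the letter of the outward point covering it. -/
structure IsAdmissible (P : LinePairing n) (u : ℤ → Letter N) : Prop where
  eq_linv : ∀ {i j}, P.Mate i j → u j = linv (u i)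
  ne_linv : ∀ {i j}, P.Out i → P.Out j → i < j → Balanced P.Mate i j → u i ≠ linv (u j)

theorem not_out_of_mate (h : P.Mate i j) : ¬ P.Out j := by
  rintro (hj | ⟨k, hk⟩)
  · exact P.not_through_right h hj
  · exact P.not_mate_of_mate h hk

theorem balanced_trans {i j k : ℤ} (hi : Balanced P.Mate i j) (hjk : P.Mate j k)
    (hj : Balanced P.Mate j k) (hij : i < j) : Balanced P.Mate i (k + 1) := by
  have hlt := P.lt hjk
  intro x hix hxk
  rcases lt_trichotomy x j with hxj | rfl | hjx
  · obtain ⟨y, hy, hy', hxy⟩ := hi x hix hxj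
    exact ⟨y, hy, by lia, hxy⟩
  · exact ⟨k, by lia, by lia, Or.inl hjk⟩
  rcases (Int.lt_add_one_iff.1 hxk).eq_or_lt with rfl | hxk
  · exact ⟨j, hij, by lia, Or.inr hjk⟩
  · obtain ⟨y, hy, hy', hxy⟩ := hj x hjx hxk
    exact ⟨y, by lia, by lia, hxy⟩

/-- `L` is the stack, top first, after reading the segment `[p, t)` while pushing outward points and
letting each closer pop its opener. In `t :: L`, consecutive entries enclose a balanced interval. -/
structure IsStack (P : LinePairing n) (u : ℤ → Letter N) (p t : ℤ) (L : List ℤ) : Prop where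
  chain : (t :: L).IsChain fun x y => y < x ∧ Balanced P.Mate y x
  out : ∀ x ∈ L, P.Out x
  le : ∀ x ∈ L, p ≤ x
  mem : p ∈ L
  through_mem : ∀ x, P.Through x → p ≤ x → x < t → x ∈ L
  mk_eq : FreeGroup.mk (seg u p t) = FreeGroup.mk (L.map u).reverse

namespace IsStack

theorem singleton (hp : P.Out p) : P.IsStack u p (p + 1) [p] where
  chain := List.isChain_pair.2 ⟨lt_add_one p, fun x h h' => by lia⟩
  out := by simpa using hp
  le := by simp
  mem := by simp
  through_mem x _ h h' := List.mem_singleton.2 (by lia)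
  mk_eq := by simp [seg, Int.range]

theorem push (h : P.IsStack u p t L) (hpt : p ≤ t) (ht : P.Out t) :
    P.IsStack u p (t + 1) (t :: L) where
  chain := List.isChain_cons_cons.2 ⟨⟨lt_add_one t, fun x h h' => by lia⟩, h.chain⟩
  out := List.forall_mem_cons.2 ⟨ht, h.out⟩
  le := List.forall_mem_cons.2 ⟨hpt, h.le⟩
  mem := List.mem_cons_of_mem _ h.mem
  through_mem x hx hpx hxt := by
    rcases (Int.lt_add_one_iff.1 hxt).eq_or_lt with rfl | hxt
    · exact List.mem_cons_self
    · exact List.mem_cons_of_mem _ (h.through_mem x hx hpx hxt)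
  mk_eq := by
    rw [seg_succ u hpt, ← FreeGroup.mul_mk, h.mk_eq, FreeGroup.mul_mk, List.map_cons,
      List.reverse_cons]

theorem head_eq_of_mate {x : ℤ} (h : P.IsStack u p t (x :: L)) (hi : P.Mate i t) : i = x := by
  obtain ⟨hxt, hbal⟩ := (List.isChain_cons_cons.1 h.chain).1
  rcases lt_trichotomy i x with hix | hix | hxi
  · exfalso
    obtain ⟨y, -, hyt, hy | hy⟩ := P.balanced hi x hix hxt
    · obtain ⟨z, hxz, -, hz | hz⟩ := hbal y (P.lt hy) hyt
      · exact P.not_mate_of_mate hy hz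
      · exact hxz.ne (P.left_unique hy hz)
    · exact not_out_of_mate hy (h.out x List.mem_cons_self)
  · exact hix
  · exfalso
    obtain ⟨z, -, hzt, hz | hz⟩ := hbal i hxi (P.lt hi)
    · exact hzt.ne (P.right_unique hz hi)
    · exact P.not_mate_of_mate hz hi

theorem pop (hP : P.IsAdmissible u) (h : P.IsStack u p t (i :: L)) (hit : P.Mate i t)
    (hpi : p ≠ i) : P.IsStack u p (t + 1) L := by
  have hpL : p ∈ L := (List.mem_cons.1 h.mem).resolve_left hpi
  have hpt : p ≤ t := (h.le i List.mem_cons_self).trans (P.lt hit).le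
  refine ⟨?_, fun x hx => h.out x (List.mem_cons_of_mem _ hx),
    fun x hx => h.le x (List.mem_cons_of_mem _ hx), hpL, fun x hx hpx hxt => ?_, ?_⟩
  · obtain ⟨x, L, rfl⟩ := List.exists_cons_of_ne_nil (List.ne_nil_of_mem hpL)
    obtain ⟨⟨hlt, hbal⟩, hchain⟩ := List.isChain_cons_cons.1 h.chain
    obtain ⟨⟨hxi, hbal'⟩, hchain⟩ := List.isChain_cons_cons.1 hchain
    exact List.isChain_cons_cons.2
      ⟨⟨by lia, balanced_trans hbal' hit hbal hxi⟩, hchain⟩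
  · have hxt' : x ≠ t := by rintro rfl; exact P.not_through_right hit hx
    have hxi : x ≠ i := by rintro rfl; exact P.not_through_left hit hx
    exact (List.mem_cons.1 (h.through_mem x hx hpx (by lia))).resolve_left hxi
  · rw [seg_succ u hpt, ← FreeGroup.mul_mk, h.mk_eq, hP.eq_linv hit, List.map_cons,
      List.reverse_cons, ← FreeGroup.mul_mk, mul_assoc, mk_mul_mk_linv, mul_one]

/-- Each stack entry covers the next one, so admissibility leaves nothing to cancel. -/
theorem reduce_eq (hP : P.IsAdmissible u) (h : P.IsStack u p t L) :
    FreeGroup.reduce (seg u p t) = (L.map u).reverse := by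
  have hred : FreeGroup.IsReduced (L.map u).reverse := by
    rw [← List.map_reverse]
    refine isReduced_map_of_isChain u (List.isChain_reverse.2 ?_)
    exact h.chain.tail.imp_of_mem_imp fun x y hx hy hxy =>
      hP.ne_linv (h.out y hy) (h.out x hx) hxy.1 hxy.2
  rw [FreeGroup.reduce.sound h.mk_eq, hred.reduce_eq]

end IsStack

theorem exists_isStack (hP : P.IsAdmissible u) (hp : P.Out p) (hpt : p < t)
    (hopen : ∀ j, P.Mate p j → t ≤ j) : ∃ L, P.IsStack u p t L := by
  induction t, hpt using Int.leInduction with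
  | base => exact ⟨[p], .singleton hp⟩
  | succ t hpt ih =>
    obtain ⟨L, hL⟩ := ih fun j hj => (Int.le_add_one le_rfl).trans (hopen j hj)
    rcases P.total t with ht | ⟨i, hi⟩
    · exact ⟨t :: L, hL.push (by lia) ht⟩
    · obtain ⟨x, L, rfl⟩ := List.exists_cons_of_ne_nil (List.ne_nil_of_mem hL.mem)
      obtain rfl := hL.head_eq_of_mate hi
      refine ⟨L, hL.pop hP hi ?_⟩
      rintro rfl
      exact absurd (hopen t hi) (by lia)

theorem mk_seg_ne_one (hP : P.IsAdmissible u) (h : P.Mate i j) (hit : i < t) (htj : t ≤ j) :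
    FreeGroup.mk (seg u i t) ≠ 1 := by
  obtain ⟨L, hL⟩ := exists_isStack hP (Or.inr ⟨j, h⟩) hit fun k hk =>
    htj.trans (P.right_unique h hk).le
  intro hone
  have hnil : (L.map u).reverse = [] :=
    (hL.reduce_eq hP).symm.trans (FreeGroup.toWord_eq_nil_iff.2 hone)
  obtain rfl : L = [] := by simpa using hnil
  exact List.not_mem_nil hL.mem

theorem mk_seg_eq_one (hP : P.IsAdmissible u) (h : P.Mate i j) :
    FreeGroup.mk (seg u i (j + 1)) = 1 := by
  obtain ⟨_ | ⟨x, L⟩, hL⟩ := exists_isStack hP (Or.inr ⟨j, h⟩) (P.lt h) fun k hk =>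
    (P.right_unique h hk).le
  · exact absurd hL.mem List.not_mem_nil
  obtain rfl := hL.head_eq_of_mate h
  obtain rfl : L = [] := by
    rcases L with _ | ⟨y, L⟩
    · rfl
    · have hyi := (List.isChain_cons_cons.1 hL.chain.tail).1.1
      exact absurd (hL.le y (by simp)) hyi.not_ge
  rw [seg_succ u (P.lt h).le, ← FreeGroup.mul_mk, hL.mk_eq, hP.eq_linv h]
  exact mk_mul_mk_linv (u i)

/-- The mate of a closer `j` is the last `i < j` for which the word on `[i, j]` reduces to `1`. -/
theorem mate_le_mate (hP : P.IsAdmissible u) (hQ : Q.IsAdmissible u) {i' : ℤ} (h : P.Mate i j)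
    (h' : Q.Mate i' j) : i' ≤ i := by
  by_contra! hlt
  have hj := Q.lt h'
  refine mk_seg_ne_one hP h hlt hj.le ?_
  calc FreeGroup.mk (seg u i i')
      = FreeGroup.mk (seg u i i') * FreeGroup.mk (seg u i' (j + 1)) := by
        rw [mk_seg_eq_one hQ h', mul_one]
    _ = FreeGroup.mk (seg u i (j + 1)) := by
        rw [FreeGroup.mul_mk, seg_append_seg u hlt.le (by lia)]
    _ = 1 := mk_seg_eq_one hP h

theorem out_iff_getLast?_reduce_ne (hP : P.IsAdmissible u) (hp : P.Through p) (hpj : p < j) :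
    P.Out j ↔ (FreeGroup.reduce (seg u p j)).getLast? ≠ some (linv (u j)) := by
  obtain ⟨_ | ⟨x, L⟩, hL⟩ := exists_isStack hP (Or.inl hp) hpj fun k hk =>
    absurd hp (P.not_through_left hk)
  · exact absurd hL.mem List.not_mem_nil
  obtain ⟨hxj, hbal⟩ := (List.isChain_cons_cons.1 hL.chain).1
  simp only [hL.reduce_eq hP, List.map_cons, List.getLast?_reverse, List.head?_cons, ne_eq,
    Option.some.injEq]
  refine ⟨fun hj => hP.ne_linv (hL.out x List.mem_cons_self) hj hxj hbal, fun hne => ?_⟩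
  refine (P.total j).resolve_right ?_
  rintro ⟨i, hi⟩
  obtain rfl := hL.head_eq_of_mate hi
  exact hne (by rw [hP.eq_linv hi, linv_linv])

theorem exists_strictMono_through (P : LinePairing n) (c : ℤ) :
    ∃ f : ℕ → ℤ, StrictMono f ∧
      ∀ i : ℕ, P.Through (f i) ∧ c ≤ f i ∧ f i < c + (i + 1) * n := by
  choose f hle hlt hthrough using fun i : ℕ => P.exists_through (c + i * n)
  refine ⟨f, strictMono_nat_of_lt_succ fun i => (hlt i).trans_le ?_,
    fun i => ⟨hthrough i, le_trans ?_ (hle i), (hlt i).trans_eq (by ring)⟩⟩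
  · exact (le_of_eq (by push_cast; ring)).trans (hle (i + 1))
  · exact le_add_of_nonneg_right (by positivity)

/-- Through strings are never popped. -/
theorem le_length_reduce_seg (hP : P.IsAdmissible u) (hp : P.Through p) (hpt : p < t) {k : ℕ}
    (hk : p + k * n ≤ t) : k ≤ (FreeGroup.reduce (seg u p t)).length := by
  obtain ⟨L, hL⟩ := exists_isStack hP (Or.inl hp) hpt fun j hj =>
    absurd hp (P.not_through_left hj)
  obtain ⟨f, hf, hthrough⟩ := P.exists_strictMono_through p
  have hsub : (Finset.range k).image f ⊆ L.toFinset := by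
    refine Finset.image_subset_iff.2 fun i hi => List.mem_toFinset.2 ?_
    obtain ⟨hi', hpi, hlt⟩ := hthrough i
    have hik : ((i : ℤ) + 1) * n ≤ k * n :=
      mul_le_mul_of_nonneg_right (by exact_mod_cast Finset.mem_range.1 hi) (by positivity)
    exact hL.through_mem _ hi' hpi (by lia)
  calc k = ((Finset.range k).image f).card := by
        rw [Finset.card_image_of_injective _ hf.injective, Finset.card_range]
    _ ≤ L.toFinset.card := Finset.card_le_card hsub
    _ ≤ L.length := L.toFinset_card_le
    _ = (FreeGroup.reduce (seg u p t)).length := by simp [hL.reduce_eq hP]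

/-- Read from through strings far enough to the left of `j`, the reductions of the word before `j`
end with the same letter. -/
theorem out_iff_out (hP : P.IsAdmissible u) (hQ : Q.IsAdmissible u) (j : ℤ) :
    P.Out j ↔ Q.Out j := by
  obtain ⟨p, -, hpj, hp⟩ := P.exists_through (j - (n + 1 : ℕ) * n - n)
  obtain ⟨q, hpq, hqp, hq⟩ := Q.exists_through (p + 1 - n)
  have hlen : n + 1 ≤ (FreeGroup.reduce (seg u p j)).length :=
    le_length_reduce_seg hP hp (by lia) (by lia)
  rw [out_iff_getLast?_reduce_ne hP hp (by lia), out_iff_getLast?_reduce_ne hQ hq (by lia),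
    ← seg_append_seg u (show q ≤ p by lia) (show p ≤ j by lia), getLast?_reduce_append]
  rw [length_seg]
  lia

theorem mate_of_mate (hP : P.IsAdmissible u) (hQ : Q.IsAdmissible u) (h : P.Mate i j) :
    Q.Mate i j := by
  have hj : ¬ Q.Out j := fun hj => not_out_of_mate h ((out_iff_out hP hQ j).2 hj)
  obtain ⟨i', hi'⟩ := (Q.total j).resolve_left hj
  rwa [le_antisymm (mate_le_mate hQ hP hi' h) (mate_le_mate hP hQ h hi')]

theorem mate_iff_mate (hP : P.IsAdmissible u) (hQ : Q.IsAdmissible u) :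
    P.Mate i j ↔ Q.Mate i j :=
  ⟨mate_of_mate hP hQ, mate_of_mate hQ hP⟩

end LinePairing

/-! ### Blocks of a half-pairing -/

section Blocks

variable {n : ℕ} {P : Finpartition (Finset.univ : Finset (Fin n))} {π : HalfPairing n}
  {x y z : Fin n}

theorem rel_iff_part_eq : Rel P x y ↔ P.part x = P.part y :=
  P.mem_part_iff_exists.symm.trans
    (P.mem_part_iff_part_eq_part (Finset.mem_univ x) (Finset.mem_univ y))

theorem isSingleton_iff_part_eq : IsSingleton P x ↔ P.part x = {x} := by
  constructor
  · rintro ⟨B, hB, hx, hcard⟩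
    obtain ⟨y, rfl⟩ := Finset.card_eq_one.1 hcard
    rw [P.part_eq_of_mem hB hx, Finset.mem_singleton.1 hx]
  · intro h
    exact ⟨{x}, h ▸ P.part_mem.2 (Finset.mem_univ x), Finset.mem_singleton_self x,
      Finset.card_singleton x⟩

theorem rel_equivalence (P : Finpartition (Finset.univ : Finset (Fin n))) :
    Equivalence (Rel P) where
  refl _ := rel_iff_part_eq.2 rfl
  symm h := rel_iff_part_eq.2 (rel_iff_part_eq.1 h).symm
  trans h h' := rel_iff_part_eq.2 ((rel_iff_part_eq.1 h).trans (rel_iff_part_eq.1 h'))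

theorem Rel.eq_of_isSingleton (h : Rel P x y) (hx : IsSingleton P x) : x = y := by
  have hy : y ∈ P.part x := rel_iff_part_eq.1 h ▸ P.mem_part_self.2 (Finset.mem_univ y)
  rw [isSingleton_iff_part_eq.1 hx, Finset.mem_singleton] at hy
  exact hy.symm

theorem RelTilde.isSingleton (h : RelTilde P x y) (hx : IsSingleton P x) : IsSingleton P y := by
  rcases h with h | h
  · exact h.eq_of_isSingleton hx ▸ hx
  · exact h.2

theorem relTilde_equivalence (P : Finpartition (Finset.univ : Finset (Fin n))) :
    Equivalence (RelTilde P) where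
  refl x := Or.inl ((rel_equivalence P).refl x)
  symm h := h.imp (rel_equivalence P).symm And.symm
  trans := by
    rintro x y z (h | h) (h' | h')
    · exact Or.inl ((rel_equivalence P).trans h h')
    · obtain rfl := ((rel_equivalence P).symm h).eq_of_isSingleton h'.1
      exact Or.inr h'
    · obtain rfl := h'.eq_of_isSingleton h.2
      exact Or.inr h
    · exact Or.inr ⟨h.1, h'.2⟩

theorem Pairs.symm (h : Pairs π x y) : Pairs π y x :=
  ⟨h.1.symm, (rel_equivalence π.P).symm h.2⟩

theorem Pairs.unique (hy : Pairs π x y) (hz : Pairs π x z) : y = z := by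
  by_contra hyz
  have hmem : ∀ t, Rel π.P x t → t ∈ π.P.part x := fun t ht =>
    rel_iff_part_eq.1 ht ▸ π.P.mem_part_self.2 (Finset.mem_univ t)
  have hthree : 2 < (π.P.part x).card :=
    Finset.two_lt_card.2 ⟨x, hmem x ((rel_equivalence π.P).refl x), y, hmem y hy.2, z,
      hmem z hz.2, hy.1, hz.1, hyz⟩
  exact hthree.not_ge (π.card_le _ (π.P.part_mem.2 (Finset.mem_univ x)))

theorem Pairs.not_isSingleton (h : Pairs π x y) : ¬ IsSingleton π.P x :=
  fun hx => h.1 (h.2.eq_of_isSingleton hx)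

theorem exists_pairs_of_not_isSingleton (hx : ¬ IsSingleton π.P x) : ∃ y, Pairs π x y := by
  contrapose! hx
  refine isSingleton_iff_part_eq.2 (Finset.eq_singleton_iff_unique_mem.2
    ⟨π.P.mem_part_self.2 (Finset.mem_univ x), fun y hy => ?_⟩)
  by_contra hyx
  exact hx y ⟨Ne.symm hyx, (rel_equivalence π.P).symm (π.P.mem_part_iff_exists.1 hy)⟩

end Blocks

/-! ### Unrolling the circle -/

section Circle

variable {n : ℕ}

theorem natCast_zmod_injective :
    Function.Injective fun f : Fin n => ((f : ℕ) : ZMod n) := fun f g h => by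
  have hmod := (ZMod.natCast_eq_natCast_iff' f g n).1 h
  rwa [Nat.mod_eq_of_lt f.isLt, Nat.mod_eq_of_lt g.isLt, Fin.val_inj] at hmod

theorem natCast_cnext (i : Fin n) : ((cnext i : ℕ) : ZMod n) = i + 1 := by
  simp [cnext]

theorem natCast_cprev (i : Fin n) : ((cprev i : ℕ) : ZMod n) = i - 1 := by
  have hi : 1 ≤ (i : ℕ) + n := by lia
  simp [cprev, Nat.cast_sub hi]

theorem natCast_cadd (a j : Fin n) : ((cadd a j : ℕ) : ZMod n) = a + j := by
  simp [cadd]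

theorem natCast_csub (x a : Fin n) : ((csub x a : ℕ) : ZMod n) = x - a := by
  have ha : (a : ℕ) ≤ x + n := by lia
  simp [csub, Nat.cast_sub ha]

variable [NeZero n]

/-- The point of the circle below the integer `x`, when positions are counted from `a`. -/
def pos (n : ℕ) [NeZero n] (a x : ℤ) : Fin n :=
  ⟨(x - a : ZMod n).val, ZMod.val_lt _⟩

theorem natCast_pos (a x : ℤ) : ((pos n a x : ℕ) : ZMod n) = x - a :=
  ZMod.natCast_zmod_val _

theorem cnext_pos (a x : ℤ) : cnext (pos n a x) = pos n a (x + 1) :=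
  natCast_zmod_injective (by simp only [natCast_cnext, natCast_pos]; push_cast; ring)

theorem cprev_pos (a x : ℤ) : cprev (pos n a x) = pos n a (x - 1) :=
  natCast_zmod_injective (by simp only [natCast_cprev, natCast_pos]; push_cast; ring)

theorem csub_pos_pos (a x y : ℤ) : csub (pos n a x) (pos n a y) = pos n y x :=
  natCast_zmod_injective (by simp only [natCast_csub, natCast_pos]; ring)

theorem pos_add_period (a x : ℤ) : pos n a (x + n) = pos n a x :=
  natCast_zmod_injective (by simp [natCast_pos])

theorem pos_sub_period (a x : ℤ) : pos n a (x - n) = pos n a x :=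
  natCast_zmod_injective (by simp [natCast_pos])

theorem pos_natCast (x a : Fin n) : pos n (a : ℕ) (x : ℕ) = csub x a :=
  natCast_zmod_injective (by simp [natCast_pos, natCast_csub])

theorem cadd_pos (a : Fin n) (x : ℤ) : cadd a (pos n (a : ℕ) x) = pos n 0 x :=
  natCast_zmod_injective (by simp [natCast_pos, natCast_cadd])

theorem val_pos_self {c x : ℤ} (hcx : c ≤ x) (hxc : x < c + n) : ((pos n c x : ℕ) : ℤ) = x - c := by
  change (((x : ZMod n) - c).val : ℤ) = x - c
  rw [← Int.cast_sub, ZMod.val_intCast, Int.emod_eq_of_lt (by lia) (by lia)]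

theorem pos_injOn {a c x y : ℤ} (hx : c ≤ x) (hx' : x < c + n) (hy : c ≤ y) (hy' : y < c + n)
    (h : pos n a x = pos n a y) : x = y := by
  have hval := congrArg (fun f => ((csub f (pos n a c) : ℕ) : ℤ)) h
  simp only [csub_pos_pos, val_pos_self hx hx', val_pos_self hy hy'] at hval
  lia

theorem exists_pos_eq (a : ℤ) (f : Fin n) (c : ℤ) : ∃ x, c ≤ x ∧ x < c + n ∧ pos n a x = f := by
  have hlt := (csub f (pos n a c)).isLt
  refine ⟨c + (csub f (pos n a c) : ℕ), by lia, by lia, natCast_zmod_injective ?_⟩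
  simp only [natCast_pos, Int.cast_add, Int.cast_natCast, natCast_csub]
  ring

theorem inCyc_pos_iff (a : ℤ) {c x y : ℤ} (hx : c ≤ x) (hx' : x < c + n) (hy : c ≤ y)
    (hy' : y < c + n) : InCyc (pos n a c) (pos n a y) (pos n a x) ↔ x ≤ y := by
  change csub (pos n a x) (pos n a c) ≤ csub (pos n a y) (pos n a c) ↔ x ≤ y
  rw [csub_pos_pos, csub_pos_pos, Fin.le_def, ← Int.ofNat_le, val_pos_self hx hx',
    val_pos_self hy hy']
  lia

/-- Moving the cut by one place exchanges the roles of the two crossing blocks. -/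
theorem NonCrossingRel.rel_pos_of_mem_window {r : Fin n → Fin n → Prop} (hr : NonCrossingRel r)
    (he : Equivalence r) (a c : ℤ) : ∀ i j k l : ℤ, c ≤ i → i < j → j < k → k < l → l < c + n →
      r (pos n a i) (pos n a k) → r (pos n a j) (pos n a l) → r (pos n a i) (pos n a j) := by
  induction c using Int.inductionOn' (b := a) with
  | zero =>
    intro i j k l hai hij hjk hkl hla
    have hlt : ∀ x y, a ≤ x → x < y → y < a + n → pos n a x < pos n a y := fun x y hx hxy hy => by
      rw [Fin.lt_def, ← Int.ofNat_lt, val_pos_self hx (by lia), val_pos_self (by lia) hy]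
      lia
    exact hr _ _ _ _ (hlt i j hai hij (by lia)) (hlt j k (by lia) hjk (by lia))
      (hlt k l (by lia) hkl hla)
  | succ c _ ih =>
    intro i j k l hci hij hjk hkl hlc hik hjl
    by_cases hl : l < c + n
    · exact ih i j k l (by lia) hij hjk hkl hl hik hjl
    obtain rfl : l = c + n := by lia
    rw [pos_add_period] at hjl
    have hci := ih c i j k le_rfl (by lia) hij hjk (by lia) (he.symm hjl) hik
    exact he.trans (he.symm hci) (he.symm hjl)
  | pred c _ ih =>
    intro i j k l hci hij hjk hkl hlc hik hjl
    by_cases hi : c ≤ i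
    · exact ih i j k l hi hij hjk hkl (by lia) hik hjl
    rw [← pos_add_period a i] at hik ⊢
    have hjk' := ih j k l (i + n) (by lia) hjk hkl (by lia) (by lia) hjl (he.symm hik)
    exact he.trans hik (he.symm hjk')

theorem NonCrossingRel.rel_pos {r : Fin n → Fin n → Prop} (hr : NonCrossingRel r)
    (he : Equivalence r) (a : ℤ) {i j k l : ℤ} (hij : i < j) (hjk : j < k) (hkl : k < l)
    (hli : l < i + n) (hik : r (pos n a i) (pos n a k)) (hjl : r (pos n a j) (pos n a l)) :
    r (pos n a i) (pos n a j) :=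
  hr.rel_pos_of_mem_window he a i i j k l le_rfl hij hjk hkl hli hik hjl

end Circle

namespace HalfPairing

variable {n : ℕ} [NeZero n] {π : HalfPairing n} {a i j k x y : ℤ}

/-- The through strings of `π` on the unrolled circle. -/
def LineThrough (π : HalfPairing n) (a x : ℤ) : Prop :=
  IsSingleton π.P (pos n a x)

/-- The pairs of `π` on the unrolled circle: of the two arcs joining paired points, the one that
encloses no through string is chosen. -/
def LineMate (π : HalfPairing n) (a i j : ℤ) : Prop :=
  i < j ∧ Pairs π (pos n a i) (pos n a j) ∧ ∀ x, i ≤ x → x ≤ j → ¬ π.LineThrough a x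

theorem exists_lineThrough (π : HalfPairing n) (a c : ℤ) :
    ∃ x, c ≤ x ∧ x < c + n ∧ π.LineThrough a x := by
  obtain ⟨f, hf⟩ := π.exists_singleton
  obtain ⟨x, hcx, hxc, rfl⟩ := exists_pos_eq a f c
  exact ⟨x, hcx, hxc, hf⟩

theorem add_one_lt_add_of_forall_not_lineThrough (h : ∀ x, i ≤ x → x ≤ j → ¬ π.LineThrough a x) :
    j + 1 < i + n := by
  obtain ⟨x, hix, hxi, hx⟩ := π.exists_lineThrough a i
  by_contra! hle
  exact h x hix (by lia) hx

theorem LineMate.lt_add (h : π.LineMate a i j) : j < i + n :=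
  (lt_add_one j).trans (add_one_lt_add_of_forall_not_lineThrough h.2.2)

theorem LineMate.sub_period (h : π.LineMate a i (j + n)) : π.LineMate a (i - n) j := by
  obtain ⟨hlt, hpairs, hfree⟩ := h
  refine ⟨by lia, by rwa [pos_sub_period, ← pos_add_period a j], fun x hix hxj => ?_⟩
  have hx := hfree (x + n) (by lia) (by lia)
  rwa [LineThrough, pos_add_period] at hx

/-- If both arcs between `x` and `y` contained a through string, the merged block of through strings
would cross the pair. -/
theorem lineMate_or_lineMate_of_pairs (hxy : x < y) (hyx : y < x + n)
    (h : Pairs π (pos n a x) (pos n a y)) : π.LineMate a x y ∨ π.LineMate a y (x + n) := by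
  have hx : ¬ π.LineThrough a x := h.not_isSingleton
  have hy : ¬ π.LineThrough a y := h.symm.not_isSingleton
  have hx' : ¬ π.LineThrough a (x + n) := by rwa [LineThrough, pos_add_period]
  by_contra! hcon
  obtain ⟨z, hxz, hzy, hz⟩ : ∃ z, x ≤ z ∧ z ≤ y ∧ π.LineThrough a z := by
    by_contra! hfree
    exact hcon.1 ⟨hxy, h, hfree⟩
  obtain ⟨t, hyt, htx, ht⟩ : ∃ t, y ≤ t ∧ t ≤ x + n ∧ π.LineThrough a t := by
    by_contra! hfree
    exact hcon.2 ⟨hyx, by rw [pos_add_period]; exact h.symm, hfree⟩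
  have hne : ∀ {s}, π.LineThrough a s → s ≠ x ∧ s ≠ y ∧ s ≠ x + n := fun hs =>
    ⟨by rintro rfl; exact hx hs, by rintro rfl; exact hy hs, by rintro rfl; exact hx' hs⟩
  obtain ⟨hzx, hzy', -⟩ := hne hz
  obtain ⟨-, hty, htx'⟩ := hne ht
  have he := relTilde_equivalence π.P
  have hcross : RelTilde π.P (pos n a x) (pos n a z) :=
    π.nc_tilde.rel_pos he a (by lia) (by lia) (by lia) (by lia) (Or.inl h.2) (Or.inr ⟨hz, ht⟩)
  exact hx ((he.symm hcross).isSingleton hz)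

theorem rel_pos_iff_lineMate (hxy : x < y) (hyx : y < x + n) :
    Rel π.P (pos n a x) (pos n a y) ↔ π.LineMate a x y ∨ π.LineMate a y (x + n) := by
  constructor
  · intro h
    refine lineMate_or_lineMate_of_pairs hxy hyx ⟨fun heq => hxy.ne ?_, h⟩
    exact pos_injOn le_rfl (by lia) hxy.le hyx heq
  · rintro (h | h)
    · exact h.2.1.2
    · have hyx := (rel_equivalence π.P).symm h.2.1.2
      rwa [pos_add_period] at hyx

theorem lineMate_total (π : HalfPairing n) (a x : ℤ) :
    (π.LineThrough a x ∨ ∃ y, π.LineMate a x y) ∨ ∃ y, π.LineMate a y x := by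
  by_cases hx : π.LineThrough a x
  · exact Or.inl (Or.inl hx)
  obtain ⟨f, hf⟩ := exists_pairs_of_not_isSingleton hx
  obtain ⟨y, hxy, hyx, rfl⟩ := exists_pos_eq a f x
  have hne : x ≠ y := by rintro rfl; exact hf.1 rfl
  rcases lineMate_or_lineMate_of_pairs (by lia) hyx hf with h | h
  · exact Or.inl (Or.inr ⟨y, h⟩)
  · exact Or.inr ⟨y - n, h.sub_period⟩

theorem LineMate.right_unique (hj : π.LineMate a i j) (hk : π.LineMate a i k) : j = k :=
  pos_injOn hj.1.le hj.lt_add hk.1.le hk.lt_add (hj.2.1.unique hk.2.1)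

theorem LineMate.left_unique (hi : π.LineMate a i k) (hj : π.LineMate a j k) : i = j := by
  have hik := hi.lt_add
  have hjk := hj.lt_add
  have hi' := hi.1
  have hj' := hj.1
  exact pos_injOn (c := k - n) (by lia) (by lia) (by lia) (by lia)
    (hi.2.1.symm.unique hj.2.1.symm)

theorem LineMate.lt_add_of_le {x y : ℤ} (hij : π.LineMate a i j) (hxy : π.LineMate a x y)
    (hxj : x ≤ j) : y < i + n := by
  have hfree : ∀ z, i ≤ z → z ≤ y → ¬ π.LineThrough a z := by
    intro z hiz hzy
    rcases le_total z j with hzj | hjz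
    · exact hij.2.2 z hiz hzj
    · exact hxy.2.2 z (hxj.trans hjz) hzy
  exact (lt_add_one y).trans (add_one_lt_add_of_forall_not_lineThrough hfree)

theorem LineMate.not_lineMate (hij : π.LineMate a i j) : ¬ π.LineMate a j k := fun hjk => by
  have hik := hij.lt_add_of_le hjk le_rfl
  have hlt := hij.1.trans hjk.1
  exact hlt.ne (pos_injOn le_rfl (by lia) hlt.le hik (hij.2.1.symm.unique hjk.2.1))

theorem LineMate.not_crossing {x y : ℤ} (hij : π.LineMate a i j) (hxy : π.LineMate a x y)
    (hix : i < x) (hxj : x < j) : ¬ j < y := fun hjy => by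
  have hyi := hij.lt_add_of_le hxy hxj.le
  have hrel := π.nc.rel_pos (rel_equivalence π.P) a hix hxj hjy hyi hij.2.1.2 hxy.2.1.2
  have hne : pos n a i ≠ pos n a x := fun heq =>
    hix.ne (pos_injOn le_rfl (by lia) hix.le (by lia) heq)
  exact hxj.ne' (pos_injOn (hix.trans hxj).le (by lia) hix.le (by lia)
    (hij.2.1.unique ⟨hne, hrel⟩))

theorem LineMate.balanced (h : π.LineMate a i j) : Balanced (π.LineMate a) i j := by
  intro x hix hxj
  rcases π.lineMate_total a x with (hx | ⟨y, hxy⟩) | ⟨y, hyx⟩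
  · exact absurd hx (h.2.2 x hix.le hxj.le)
  · have hyj : y ≠ j := by rintro rfl; exact hix.ne (h.left_unique hxy)
    have hle := h.not_crossing hxy hix hxj
    exact ⟨y, hix.trans hxy.1, by lia, Or.inl hxy⟩
  · have hiy : y ≠ i := by rintro rfl; exact hxj.ne (hyx.right_unique h)
    have hle : ¬ y < i := fun hyi => hyx.not_crossing h hyi hix hxj
    exact ⟨y, by lia, hyx.1.trans hxj, Or.inr hyx⟩

/-- The half-pairing `π` unrolled along the universal cover of the circle, positions being counted
from `a`. -/
def unroll (π : HalfPairing n) (a : ℤ) : LinePairing n where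
  Through := π.LineThrough a
  Mate := π.LineMate a
  exists_through := π.exists_lineThrough a
  lt h := h.1
  right_unique := LineMate.right_unique
  left_unique := LineMate.left_unique
  not_mate_of_mate := LineMate.not_lineMate
  not_through_left h := h.2.2 _ le_rfl h.1.le
  not_through_right h := h.2.2 _ h.1.le le_rfl
  total := π.lineMate_total a
  balanced := LineMate.balanced

theorem outOriented_pos (h : (π.unroll a).Out i) : OutOriented π (pos n a i) := by
  refine h.imp id ?_
  rintro ⟨j, hij⟩
  refine ⟨pos n a j, hij.2.1, fun f hf => ?_⟩
  obtain ⟨x, hix, hxi, rfl⟩ := exists_pos_eq a f i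
  exact hij.2.2 x hix ((inCyc_pos_iff a hix hxi hij.1.le hij.lt_add).1 hf)

theorem le_add_of_balanced (h : Balanced (π.LineMate a) i j) : j ≤ i + n := by
  have hfree : ∀ x, i + 1 ≤ x → x ≤ j - 1 → ¬ π.LineThrough a x := fun x hix hxj => by
    obtain ⟨y, -, -, hxy | hyx⟩ := h x (by lia) (by lia)
    · exact hxy.2.1.not_isSingleton
    · exact hyx.2.1.symm.not_isSingleton
  have hlt := add_one_lt_add_of_forall_not_lineThrough hfree
  lia

theorem covers_pos (hi : (π.unroll a).Out i) (hj : (π.unroll a).Out j) (hij : i < j)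
    (hji : j < i + n) (h : Balanced (π.LineMate a) i j) : Covers π (pos n a i) (pos n a j) := by
  refine ⟨outOriented_pos hi, outOriented_pos hj, ?_⟩
  rw [cnext_pos, cprev_pos]
  rcases (Int.add_one_le_iff.2 hij).eq_or_lt with rfl | hij'
  · exact Or.inl rfl
  refine Or.inr fun f hf => ?_
  obtain ⟨x, hix, hxi, rfl⟩ := exists_pos_eq a f (i + 1)
  have hxj := (inCyc_pos_iff a hix hxi (by lia) (by lia)).1 hf
  obtain ⟨y, hiy, hyj, hxy⟩ := h x (by lia) (by lia)
  have hpairs : Pairs π (pos n a x) (pos n a y) :=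
    hxy.elim (fun hxy => hxy.2.1) fun hyx => hyx.2.1.symm
  exact ⟨pos n a y, hpairs.1.symm,
    (inCyc_pos_iff a (by lia) (by lia) (by lia) (by lia)).2 (by lia), hpairs⟩

end HalfPairing

/-- The letterwise conditions in `Admissible`: paired positions carry mutually inverse letters, and
covering positions do not. The condition on the word of through strings is left out. -/
structure LetterwiseAdmissible {n N : ℕ} (w : Fin n → Letter N) (π : HalfPairing n) : Prop where
  eq_linv : ∀ r s, Pairs π r s → w r = linv (w s)
  ne_linv : ∀ i j, Covers π i j → w i ≠ linv (w j)

theorem Admissible.letterwiseAdmissible {n N : ℕ} {w : Fin n → Letter N} {π : HalfPairing n}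
    (h : Admissible w π) : LetterwiseAdmissible w π :=
  ⟨h.1.1, h.2⟩

theorem LetterwiseAdmissible.unroll {n N : ℕ} [NeZero n] {w : Fin n → Letter N}
    {π : HalfPairing n} (h : LetterwiseAdmissible w π) (a : ℤ) :
    (π.unroll a).IsAdmissible fun x => w (pos n a x) where
  eq_linv hij := h.eq_linv _ _ hij.2.1.symm
  ne_linv {i j} hi hj hij hbal := by
    rcases (HalfPairing.le_add_of_balanced hbal).eq_or_lt with rfl | hji
    · rw [pos_add_period]
      exact ne_linv_self _
    · exact h.ne_linv _ _ (HalfPairing.covers_pos hi hj hij hji hbal)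

theorem admissible_halfPairing_independent_of_rotation_general {N n : ℕ} (w : Fin n → Letter N)
    (a b : Fin n) (πa πb : HalfPairing n)
    (hπa : LetterwiseAdmissible (fun j => w (cadd a j)) πa)
    (hπb : LetterwiseAdmissible (fun j => w (cadd b j)) πb) (x y : Fin n) :
    Rel πa.P (csub x a) (csub y a) ↔ Rel πb.P (csub x b) (csub y b) := by
  have : NeZero n := ⟨a.pos.ne'⟩
  have hP := hπa.unroll (a : ℕ)
  have hQ := hπb.unroll (b : ℕ)
  simp only [cadd_pos] at hP hQ
  have hmate : ∀ i j, πa.LineMate (a : ℕ) i j ↔ πb.LineMate (b : ℕ) i j :=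
    fun i j => LinePairing.mate_iff_mate hP hQ
  have hea := rel_equivalence πa.P
  have heb := rel_equivalence πb.P
  wlog hxy : x < y generalizing x y
  · rcases (not_lt.1 hxy).eq_or_lt with rfl | hyx
    · exact iff_of_true (hea.refl _) (heb.refl _)
    · exact (Iff.intro hea.symm hea.symm).trans ((this y x hyx).trans ⟨heb.symm, heb.symm⟩)
  have hlt : ((x : ℕ) : ℤ) < (y : ℕ) := Int.ofNat_lt.2 hxy
  have hlt' : ((y : ℕ) : ℤ) < (x : ℕ) + n := by omega
  rw [← pos_natCast, ← pos_natCast, ← pos_natCast, ← pos_natCast,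
    HalfPairing.rel_pos_iff_lineMate hlt hlt', HalfPairing.rel_pos_iff_lineMate hlt hlt', hmate,
    hmate]

/-- If `w'` and `w''` are two cyclic permutations of `w` (starting at positions
`a` and `b` respectively), both with good reduction, then their admissible
half-pairings, rotated back to the original indexing of the letters of `w`,
coincide: `w` carries a canonical half-pairing. -/
theorem admissible_halfPairing_independent_of_rotation (N n k : ℕ) (hk : 1 ≤ k)
    (w : Fin n → Letter N) (v : List (Letter N))
    (hv : CycReducesTo (List.ofFn w) v) (hvc : CycReduced v) (hvk : v.length = k)
    (a b : Fin n)
    (ha : GoodReduction (List.ofFn (fun j => w (cadd a j))))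
    (hb : GoodReduction (List.ofFn (fun j => w (cadd b j))))
    (πa πb : HalfPairing n)
    (hπa : Admissible (fun j => w (cadd a j)) πa)
    (hπb : Admissible (fun j => w (cadd b j)) πb) :
    ∀ x y : Fin n, Rel πa.P (csub x a) (csub y a) ↔ Rel πb.P (csub x b) (csub y b) := by
  exact admissible_halfPairing_independent_of_rotation_general w a b πa πb
    hπa.letterwiseAdmissible hπb.letterwiseAdmissible

end NCC
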